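/- arXiv:1102.2579 — 3 statements merged into one kernel-verified Lean document; each statement's English description precedes it below -/
import Mathlib

section
/- A ring R is a division ring if, and only if, any two distinct points of the projective line P(R) are distant. -/
/-!
Over a division ring every point is either `R(1,x)` or `R(0,1)`, and any two different points in
this normal form are the rows of an explicit invertible matrix (`distant_of_unit_minor` covers the
case of two affine points `R(1,x)`, `R(1,y)` with `y - x` a unit).

Conversely, for `a ≠ 0` the points `R(1,0)` and `R(1,a)` are different, hence distant. The matrix
witnessing this has rows `(r,0)` and `(s,sa)` with `r` left invertible and `s` a unit;
if `d` is the lower right entry of the inverse matrix, then `d * s` is a two-sided inverse of `a`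
(`isUnit_of_distant`).
-/

/-- A pair `(a,b) ∈ R²` is admissible if it is the first row of an invertible 2×2 matrix. -/
def Admissible (R : Type*) [Ring R] (a b : R) : Prop :=
  ∃ γ : (Matrix (Fin 2) (Fin 2) R)ˣ, γ.val 0 0 = a ∧ γ.val 0 1 = b

/-- The projective line over `R`: cyclic left submodules `R(a,b)` with `(a,b)` admissible. -/
def ProjPoint (R : Type*) [Ring R] : Set (Submodule R (R × R)) :=
  {p | ∃ a b : R, Admissible R a b ∧ p = Submodule.span R {(a, b)}}

/-- Two points are distant if some admissible representatives of them are the two rows of an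
invertible 2×2 matrix. -/
def Distant (R : Type*) [Ring R] (p q : Submodule R (R × R)) : Prop :=
  ∃ γ : (Matrix (Fin 2) (Fin 2) R)ˣ,
    p = Submodule.span R {(γ.val 0 0, γ.val 0 1)} ∧
    q = Submodule.span R {(γ.val 1 0, γ.val 1 1)}

/-- Right multiplication of a row vector by a matrix, as a left `R`-linear map. -/
def rowMul (R : Type*) [Ring R] (γ : Matrix (Fin 2) (Fin 2) R) : (R × R) →ₗ[R] (R × R) where
  toFun v := (v.1 * γ 0 0 + v.2 * γ 1 0, v.1 * γ 0 1 + v.2 * γ 1 1)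
  map_add' x y := by
    simp only [Prod.fst_add, Prod.snd_add, add_mul, Prod.mk_add_mk, Prod.mk.injEq]
    constructor <;> abel
  map_smul' c v := by
    simp only [Prod.smul_fst, Prod.smul_snd, smul_eq_mul, RingHom.id_apply, Prod.smul_mk,
      mul_add, mul_assoc]

/-- The action of `GL₂(R)` on the projective line: `R(a,b)·γ = R((a,b)·γ)`. -/
def ptAct (R : Type*) [Ring R] (γ : (Matrix (Fin 2) (Fin 2) R)ˣ)
    (p : Submodule R (R × R)) : Submodule R (R × R) :=
  p.map (rowMul R γ.val)

/-- The standard chain: image of `P(K)` in `P(R)` under the embedding induced by `f`. -/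
def StdChain (K R : Type*) [DivisionRing K] [Ring R] (f : K →+* R) :
    Set (Submodule R (R × R)) :=
  {p | ∃ a b : K, Admissible K a b ∧ p = Submodule.span R {(f a, f b)}}

/-- A `K`-chain: an image of the standard chain under an element of `GL₂(R)`. -/
def IsKChain (K R : Type*) [DivisionRing K] [Ring R] (f : K →+* R)
    (C : Set (Submodule R (R × R))) : Prop :=
  ∃ γ : (Matrix (Fin 2) (Fin 2) R)ˣ, C = (ptAct R γ) '' StdChain K R f

/-- An affine point `R(1,x)` is a point of the projective line. -/
lemma affine_mem {R : Type*} [Ring R] (x : R) :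
    Submodule.span R {((1 : R), x)} ∈ ProjPoint R := by
  refine ⟨1, x, ⟨⟨!![1, x; 0, 1], !![1, -x; 0, 1], ?_, ?_⟩, ?_, ?_⟩, rfl⟩ <;>
    simp [Matrix.one_fin_two]

/-- Left multiplication of a generator by a unit does not change the point. -/
lemma span_unit_mul {R : Type*} [Ring R] {u : R} (hu : IsUnit u) (a b : R) :
    Submodule.span R {(u * a, u * b)} = Submodule.span R {(a, b)} :=
  Submodule.span_singleton_smul_eq hu (a, b)

/-- Over a division ring, every point is affine or the point at infinity `R(0,1)`. -/
lemma normal_form {R : Type*} [Ring R] [Nontrivial R] (h : ∀ a : R, a ≠ 0 → IsUnit a)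
    {p : Submodule R (R × R)} (hp : p ∈ ProjPoint R) :
    (∃ x : R, p = Submodule.span R {((1 : R), x)}) ∨
      p = Submodule.span R {((0 : R), (1 : R))} := by
  obtain ⟨a, b, ⟨γ, rfl, rfl⟩, rfl⟩ := hp
  by_cases ha : γ.val 0 0 = 0
  · right
    have hb : γ.val 0 1 ≠ 0 := by
      intro hb
      have := congrFun (congrFun γ.mul_inv 0) 0
      simp [Matrix.mul_apply, Fin.sum_univ_two, ha, hb] at this
    simpa [ha] using span_unit_mul (h _ hb) 0 1
  · left
    obtain ⟨u, hu⟩ := h _ ha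
    refine ⟨↑u⁻¹ * γ.val 0 1, ?_⟩
    simpa [← hu] using span_unit_mul u.isUnit 1 (↑u⁻¹ * γ.val 0 1)

/-- The matrix with rows `(1,x)`, `(1,y)` is invertible when its Schur complement `y - x` is. -/
lemma distant_of_unit_minor {R : Type*} [Ring R] {x y : R} (h : IsUnit (y - x)) :
    Distant R (Submodule.span R {((1 : R), x)}) (Submodule.span R {((1 : R), y)}) := by
  obtain ⟨u, hu⟩ := h
  obtain rfl : y = u + x := by rw [hu]; abel
  refine ⟨⟨!![1, x; 1, u + x], !![1 + x * ↑u⁻¹, -(x * ↑u⁻¹); -↑u⁻¹, ↑u⁻¹], ?_, ?_⟩, ?_, ?_⟩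
  · simp [Matrix.one_fin_two, add_mul]
  · simp [Matrix.one_fin_two, add_mul, mul_add, mul_assoc]
  · simp
  · simp

/-- If `R(1,0)` and `R(1,a)` are distant, then `a` is a unit. -/
lemma isUnit_of_distant {R : Type*} [Ring R] {a : R}
    (h : Distant R (Submodule.span R {((1 : R), (0 : R))})
      (Submodule.span R {((1 : R), a)})) : IsUnit a := by
  obtain ⟨γ, hp, hq⟩ := h
  have hu := hp.symm ▸ Submodule.mem_span_singleton_self (R := R) (γ.val 0 0, γ.val 0 1)
  have hu' := hp ▸ Submodule.mem_span_singleton_self (R := R) ((1 : R), (0 : R))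
  have hv := hq.symm ▸ Submodule.mem_span_singleton_self (R := R) (γ.val 1 0, γ.val 1 1)
  have hv' := hq ▸ Submodule.mem_span_singleton_self (R := R) ((1 : R), a)
  obtain ⟨r, hr⟩ := Submodule.mem_span_singleton.1 hu
  obtain ⟨r', hr'⟩ := Submodule.mem_span_singleton.1 hu'
  obtain ⟨s, hs⟩ := Submodule.mem_span_singleton.1 hv
  obtain ⟨t, ht⟩ := Submodule.mem_span_singleton.1 hv'
  simp only [Prod.smul_mk, smul_eq_mul, Prod.mk.injEq, mul_one, mul_zero] at hr hr' hs ht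
  have e01 := congrFun (congrFun γ.mul_inv 0) 1
  have e11 := congrFun (congrFun γ.mul_inv 1) 1
  have f11 := congrFun (congrFun γ.inv_mul 1) 1
  simp only [Matrix.mul_apply, Fin.sum_univ_two, ← hr.1, ← hr.2, ← hs.1, ← hs.2, zero_mul,
    mul_zero, add_zero, zero_add, Matrix.one_apply_eq, ne_eq, zero_ne_one, not_false_eq_true,
    Matrix.one_apply_ne] at e01 e11 f11
  rw [← hr.1] at hr'
  rw [← hs.1] at ht
  generalize (γ⁻¹).val 0 1 = m at *
  generalize (γ⁻¹).val 1 1 = d at *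
  -- `r` is left invertible, so the off-diagonal entry `m` of the inverse matrix vanishes.
  have hm : m = 0 := by
    rw [← one_mul m, ← hr'.1, mul_assoc, e01, mul_zero]
  rw [hm, mul_zero, zero_add] at e11
  have had : a * d = t := by
    calc a * d = t * s * (a * d) := by rw [ht.1, one_mul]
      _ = t * (s * a * d) := by simp only [mul_assoc]
      _ = t := by rw [e11, mul_one]
  refine ⟨⟨a, d * s, ?_, ?_⟩, rfl⟩
  · rw [← mul_assoc, had, ht.1]
  · rw [mul_assoc, f11]

/-- A ring is a division ring iff any two distinct points of its projective line are distant. -/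
theorem stmt_7 {R : Type*} [Ring R] [Nontrivial R] :
    (∀ a : R, a ≠ 0 → IsUnit a) ↔
      (∀ p ∈ ProjPoint R, ∀ q ∈ ProjPoint R, p ≠ q → Distant R p q) := by
  constructor
  · intro h p hp q hq hne
    rcases normal_form h hp with ⟨x, rfl⟩ | rfl <;> rcases normal_form h hq with ⟨y, rfl⟩ | rfl
    · refine distant_of_unit_minor (h _ fun e => hne ?_)
      rw [sub_eq_zero.1 e]
    · refine ⟨⟨!![1, x; 0, 1], !![1, -x; 0, 1], ?_, ?_⟩, ?_, ?_⟩ <;>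
        simp [Matrix.one_fin_two]
    · refine ⟨⟨!![0, 1; 1, y], !![-y, 1; 1, 0], ?_, ?_⟩, ?_, ?_⟩ <;>
        simp [Matrix.one_fin_two]
    · exact absurd rfl hne
  · intro h a ha
    refine isUnit_of_distant (h _ (affine_mem 0) _ (affine_mem a) fun e => ha ?_)
    have hmem := e.symm ▸ Submodule.mem_span_singleton_self (R := R) ((1 : R), a)
    obtain ⟨c, hc⟩ := Submodule.mem_span_singleton.1 hmem
    simpa using (congrArg Prod.snd hc).symm
end

section
/- Let R be a ring containing a (possibly skew) field K as a subring with the same unit element, and let p, q, r ∈ P(R) be mutually distant points. Then there is at least one K-chain containing p, q, and r. -/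
/-- Two generators of the same cyclic module, both with zero annihilator, differ by a unit. -/
theorem exists_unit_smul {R M : Type*} [Ring R] [AddCommGroup M] [Module R M] {v w : M}
    (hv : ∀ z : R, z • v = 0 → z = 0) (hw : ∀ z : R, z • w = 0 → z = 0)
    (h : Submodule.span R {v} = Submodule.span R {w}) : ∃ u : Rˣ, w = (u : R) • v := by
  obtain ⟨a, ha⟩ := Submodule.mem_span_singleton.1
    (h ▸ Submodule.mem_span_singleton_self w : w ∈ Submodule.span R {v})
  obtain ⟨b, hb⟩ := Submodule.mem_span_singleton.1
    (h ▸ Submodule.mem_span_singleton_self v : v ∈ Submodule.span R {w})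
  refine ⟨⟨a, b, ?_, ?_⟩, ha.symm⟩
  · exact sub_eq_zero.1 (hw _ (by rw [sub_smul, mul_smul, hb, ha, one_smul, sub_self]))
  · exact sub_eq_zero.1 (hv _ (by rw [sub_smul, mul_smul, ha, hb, one_smul, sub_self]))

theorem span_unit_smul {R M : Type*} [Ring R] [AddCommGroup M] [Module R M] (u : Rˣ) (v : M) :
    Submodule.span R {(u : R) • v} = Submodule.span R {v} :=
  Submodule.span_singleton_group_smul_eq R u v

theorem rowMul_mul {R : Type*} [Ring R] (γ δ : Matrix (Fin 2) (Fin 2) R) (v : R × R) :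
    rowMul R δ (rowMul R γ v) = rowMul R (γ * δ) v := by
  simp only [rowMul, LinearMap.coe_mk, AddHom.coe_mk, Matrix.mul_apply, Fin.sum_univ_two,
    Prod.mk.injEq]
  constructor <;> noncomm_ring

theorem rowMul_one {R : Type*} [Ring R] (v : R × R) : rowMul R 1 v = v := by
  simp [rowMul]

theorem rowMul_injective {R : Type*} [Ring R] (γ : (Matrix (Fin 2) (Fin 2) R)ˣ) :
    Function.Injective (rowMul R γ.val) :=
  Function.LeftInverse.injective (g := rowMul R γ⁻¹.val) fun v => by
    rw [rowMul_mul, Units.mul_inv, rowMul_one]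

/-- If `p` is spanned by the first row of `γ` and `p △ r`, then `r` is spanned by a combination of the
rows of `γ` in which the coefficient of the second row is a unit. -/
theorem exists_coord {R : Type*} [Ring R] (γ : (Matrix (Fin 2) (Fin 2) R)ˣ)
    {p r : Submodule R (R × R)} (hp : p = Submodule.span R {rowMul R γ.val (1, 0)})
    (hpr : Distant R p r) :
    ∃ (x : R) (y : Rˣ), r = Submodule.span R {rowMul R γ.val (x, (y : R))} := by
  obtain ⟨δ, h0, h1⟩ := hpr
  have e0 : (δ.val 0 0, δ.val 0 1) = rowMul R δ.val (1, 0) := by simp [rowMul]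
  have e1 : (δ.val 1 0, δ.val 1 1) = rowMul R δ.val (0, 1) := by simp [rowMul]
  rw [e0] at h0
  rw [e1] at h1
  have free (ε : (Matrix (Fin 2) (Fin 2) R)ˣ) (z : R)
      (hz : z • rowMul R ε.val ((1, 0) : R × R) = 0) : z = 0 := by
    rw [← map_smul] at hz
    have := rowMul_injective ε (hz.trans (map_zero _).symm)
    simpa using congrArg Prod.fst this
  obtain ⟨u, hu⟩ := exists_unit_smul (free γ) (free δ) (hp.symm.trans h0)
  -- The rows of `M = δ γ⁻¹` are the coordinates of the rows of `δ` in terms of those of `γ`.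
  obtain ⟨M, hM⟩ : ∃ M : (Matrix (Fin 2) (Fin 2) R)ˣ, δ = M * γ := ⟨δ * γ⁻¹, by simp⟩
  subst hM
  rw [Units.val_mul, ← rowMul_mul, ← map_smul] at hu
  have hu := rowMul_injective γ hu
  have h00 : M.val 0 0 = u := by simpa [rowMul] using congrArg Prod.fst hu
  have h01 : M.val 0 1 = 0 := by simpa [rowMul] using congrArg Prod.snd hu
  have a := congrFun (congrFun M.mul_inv 0) 1
  have b := congrFun (congrFun M.mul_inv 1) 1
  have c := congrFun (congrFun M.inv_mul 1) 1
  simp only [Matrix.mul_apply, Fin.sum_univ_two, h00, h01, zero_mul, mul_zero, add_zero, zero_add,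
    Matrix.one_apply_eq, Matrix.one_apply_ne (show (0 : Fin 2) ≠ 1 by decide)] at a b c
  -- `M` is lower triangular with a unit in the corner, hence so is its inverse.
  have a' : (M⁻¹).val 0 1 = 0 := by simpa using a
  rw [a', mul_zero, zero_add] at b
  refine ⟨M.val 1 0, ⟨M.val 1 1, (M⁻¹).val 1 1, b, c⟩, ?_⟩
  rw [h1, Units.val_mul, ← rowMul_mul]
  simp [rowMul]

/-- Through any three mutually distant points of `Σ(K,R)` there is at least one `K`-chain. -/
theorem stmt_10 {K R : Type*} [DivisionRing K] [Ring R] (f : K →+* R)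
    (p q r : Submodule R (R × R))
    (hpq : Distant R p q) (hpr : Distant R p r) (hqr : Distant R q r) :
    ∃ C : Set (Submodule R (R × R)), IsKChain K R f C ∧ p ∈ C ∧ q ∈ C ∧ r ∈ C := by
  obtain ⟨γ, hp, hq⟩ := hpq
  replace hp : p = Submodule.span R {rowMul R γ.val (1, 0)} := by simpa [rowMul] using hp
  replace hq : q = Submodule.span R {rowMul R γ.val (0, 1)} := by simpa [rowMul] using hq
  have swap_mul : (!![0, 1; 1, 0] : Matrix (Fin 2) (Fin 2) R) * !![0, 1; 1, 0] = 1 := by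
    simp [Matrix.one_fin_two]
  let σ : (Matrix (Fin 2) (Fin 2) R)ˣ := ⟨!![0, 1; 1, 0], !![0, 1; 1, 0], swap_mul, swap_mul⟩
  have hσ (a b : R) : rowMul R (σ * γ).val (a, b) = rowMul R γ.val (b, a) := by
    rw [Units.val_mul, ← rowMul_mul]
    simp [σ, rowMul]
  obtain ⟨x, y, hr⟩ := exists_coord γ hp hpr
  obtain ⟨x', y', hr'⟩ := exists_coord (σ * γ) (by rw [hσ]; exact hq) hqr
  rw [hσ] at hr'
  obtain ⟨u, hu⟩ := exists_unit_smul
    (fun z hz => by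
      rw [← map_smul] at hz
      have := rowMul_injective γ (hz.trans (map_zero _).symm)
      simpa using congrArg Prod.snd this)
    (fun z hz => by
      rw [← map_smul] at hz
      have := rowMul_injective γ (hz.trans (map_zero _).symm)
      simpa using congrArg Prod.fst this)
    (hr.symm.trans hr')
  rw [← map_smul] at hu
  have hx : (y' : R) = u * x := by
    simpa using congrArg Prod.fst (rowMul_injective γ hu)
  obtain ⟨x, rfl⟩ : ∃ w : Rˣ, (w : R) = x := ⟨u⁻¹ * y', by simp [hx]⟩
  let D : (Matrix (Fin 2) (Fin 2) R)ˣ :=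
    ⟨!![(x : R), 0; 0, (y : R)], !![((x⁻¹ : Rˣ) : R), 0; 0, ((y⁻¹ : Rˣ) : R)],
      by simp [Matrix.one_fin_two], by simp [Matrix.one_fin_two]⟩
  have hD (a b : R) : rowMul R (D * γ).val (a, b) = rowMul R γ.val (a * x, b * y) := by
    rw [Units.val_mul, ← rowMul_mul]
    simp [D, rowMul]
  have act (a b : R) : ptAct R (D * γ) (Submodule.span R {(a, b)}) =
      Submodule.span R {rowMul R γ.val (a * x, b * y)} := by
    rw [ptAct, Submodule.map_span, Set.image_singleton, hD]
  have swap_mul' : (!![0, 1; 1, 0] : Matrix (Fin 2) (Fin 2) K) * !![0, 1; 1, 0] = 1 := by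
    simp [Matrix.one_fin_two]
  refine ⟨_, ⟨D * γ, rfl⟩, ⟨_, ⟨1, 0, ⟨1, by simp⟩, rfl⟩, ?_⟩,
    ⟨_, ⟨0, 1, ⟨⟨!![0, 1; 1, 0], !![0, 1; 1, 0], swap_mul', swap_mul'⟩, by simp⟩, rfl⟩, ?_⟩,
    ⟨_, ⟨1, 1, ⟨⟨!![1, 1; 0, 1], !![1, -1; 0, 1], by simp [Matrix.one_fin_two],
      by simp [Matrix.one_fin_two]⟩, by simp⟩, rfl⟩, ?_⟩⟩
  · rw [act, hp, ← span_unit_smul x (rowMul R γ.val (1, 0)), ← map_smul]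
    simp
  · rw [act, hq, ← span_unit_smul y (rowMul R γ.val (0, 1)), ← map_smul]
    simp
  · rw [act, hr]
    simp
end

section
/- Let R be a ring containing a (possibly skew) field K as a subring with the same unit element. Let D and D' be K-chains of P(R), let p, q, r ∈ D be three mutually distinct points and p', q', r' ∈ D' three mutually distinct points. Then there exists γ ∈ GL₂(R) such that p·γ = p', q·γ = q', r·γ = r', and D·γ = D'. -/
section Chain

variable {K R : Type*} [DivisionRing K] [Ring R]

theorem ptAct_span (γ : (Matrix (Fin 2) (Fin 2) R)ˣ) (a b : R) :
    ptAct R γ (Submodule.span R {(a, b)}) = Submodule.span R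
      {(a * γ.val 0 0 + b * γ.val 1 0, a * γ.val 0 1 + b * γ.val 1 1)} := by
  simp [ptAct, Submodule.map_span, rowMul]

/-- `ptAct` is a right action: the factor on the left acts first. -/
theorem ptAct_mul (g h : (Matrix (Fin 2) (Fin 2) R)ˣ) (p : Submodule R (R × R)) :
    ptAct R (g * h) p = ptAct R h (ptAct R g p) := by
  unfold ptAct
  rw [← Submodule.map_comp]
  congr 1
  ext <;> simp [rowMul, Matrix.mul_apply, Fin.sum_univ_two]

theorem ptAct_one (p : Submodule R (R × R)) : ptAct R 1 p = p := by
  have h : rowMul R (1 : Matrix (Fin 2) (Fin 2) R) = LinearMap.id := by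
    ext <;> simp [rowMul]
  simp [ptAct, h]

theorem ptAct_inv_ptAct (g : (Matrix (Fin 2) (Fin 2) R)ˣ) (p : Submodule R (R × R)) :
    ptAct R g⁻¹ (ptAct R g p) = p := by
  rw [← ptAct_mul, mul_inv_cancel, ptAct_one]

theorem ptAct_ptAct_inv (g : (Matrix (Fin 2) (Fin 2) R)ˣ) (p : Submodule R (R × R)) :
    ptAct R g (ptAct R g⁻¹ p) = p := by
  rw [← ptAct_mul, inv_mul_cancel, ptAct_one]

/-- The homomorphism `GL₂(K) → GL₂(R)` induced by the ring homomorphism `f`. -/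
def glMap (f : K →+* R) : (Matrix (Fin 2) (Fin 2) K)ˣ →* (Matrix (Fin 2) (Fin 2) R)ˣ :=
  Units.map (f.mapMatrix : Matrix (Fin 2) (Fin 2) K →+* Matrix (Fin 2) (Fin 2) R).toMonoidHom

theorem glMap_apply (f : K →+* R) (g : (Matrix (Fin 2) (Fin 2) K)ˣ) (i j : Fin 2) :
    (glMap f g).val i j = f (g.val i j) := rfl

theorem ptAct_glMap_mem (f : K →+* R) (g : (Matrix (Fin 2) (Fin 2) K)ˣ)
    {p : Submodule R (R × R)} (hp : p ∈ StdChain K R f) :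
    ptAct R (glMap f g) p ∈ StdChain K R f := by
  obtain ⟨a, b, ⟨γ, rfl, rfl⟩, rfl⟩ := hp
  refine ⟨_, _, ⟨γ * g, rfl, rfl⟩, ?_⟩
  rw [ptAct_span]
  simp [glMap_apply, Matrix.mul_apply, Fin.sum_univ_two]

theorem image_glMap_stdChain (f : K →+* R) (g : (Matrix (Fin 2) (Fin 2) K)ˣ) :
    ptAct R (glMap f g) '' StdChain K R f = StdChain K R f := by
  apply Set.Subset.antisymm
  · rintro _ ⟨p, hp, rfl⟩
    exact ptAct_glMap_mem f g hp
  · intro p hp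
    refine ⟨_, ptAct_glMap_mem f g⁻¹ hp, ?_⟩
    rw [map_inv, ptAct_ptAct_inv]

theorem Admissible.ne_zero_or {a b : K} (h : Admissible K a b) : a ≠ 0 ∨ b ≠ 0 := by
  obtain ⟨γ, rfl, rfl⟩ := h
  by_contra! hc
  have h1 := congrFun (congrFun γ.mul_inv 0) 0
  simp [Matrix.mul_apply, Fin.sum_univ_two, hc.1, hc.2] at h1

theorem exists_fst (f : K →+* R) {p : Submodule R (R × R)} (hp : p ∈ StdChain K R f) :
    ∃ g : (Matrix (Fin 2) (Fin 2) K)ˣ,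
      ptAct R (glMap f g) (Submodule.span R {(1, 0)}) = p := by
  obtain ⟨a, b, ⟨γ, rfl, rfl⟩, rfl⟩ := hp
  refine ⟨γ, ?_⟩
  rw [ptAct_span]
  simp [glMap_apply]

theorem exists_snd (f : K →+* R) {q : Submodule R (R × R)} (hq : q ∈ StdChain K R f)
    (hne : Submodule.span R {(1, 0)} ≠ q) :
    ∃ g : (Matrix (Fin 2) (Fin 2) K)ˣ,
      ptAct R (glMap f g) (Submodule.span R {(1, 0)}) = Submodule.span R {(1, 0)} ∧
      ptAct R (glMap f g) (Submodule.span R {(0, 1)}) = q := by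
  obtain ⟨a, b, hab, rfl⟩ := hq
  have hb : b ≠ 0 := by
    rintro rfl
    have ha : a ≠ 0 := by simpa using hab.ne_zero_or
    apply hne
    have := Submodule.span_singleton_smul_eq ((IsUnit.mk0 a ha).map f) ((1, 0) : R × R)
    simpa using this.symm
  refine ⟨⟨!![1, 0; a, b], !![1, 0; -(b⁻¹ * a), b⁻¹], ?_, ?_⟩, ?_, ?_⟩
  · ext i j
    fin_cases i <;> fin_cases j <;> simp [Matrix.mul_apply, Fin.sum_univ_two, hb]
  · ext i j
    fin_cases i <;> fin_cases j <;> simp [Matrix.mul_apply, Fin.sum_univ_two, hb]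
  · simp [ptAct_span, glMap_apply]
  · simp [ptAct_span, glMap_apply]

theorem exists_third (f : K →+* R) {r : Submodule R (R × R)} (hr : r ∈ StdChain K R f)
    (hne : Submodule.span R {(1, 0)} ≠ r) (hne' : Submodule.span R {(0, 1)} ≠ r) :
    ∃ g : (Matrix (Fin 2) (Fin 2) K)ˣ,
      ptAct R (glMap f g) (Submodule.span R {(1, 0)}) = Submodule.span R {(1, 0)} ∧
      ptAct R (glMap f g) (Submodule.span R {(0, 1)}) = Submodule.span R {(0, 1)} ∧
      ptAct R (glMap f g) (Submodule.span R {(1, 1)}) = r := by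
  obtain ⟨a, b, hab, rfl⟩ := hr
  have hb : b ≠ 0 := by
    rintro rfl
    have ha : a ≠ 0 := by simpa using hab.ne_zero_or
    apply hne
    have := Submodule.span_singleton_smul_eq ((IsUnit.mk0 a ha).map f) ((1, 0) : R × R)
    simpa using this.symm
  have ha : a ≠ 0 := by
    rintro rfl
    apply hne'
    have := Submodule.span_singleton_smul_eq ((IsUnit.mk0 b hb).map f) ((0, 1) : R × R)
    simpa using this.symm
  refine ⟨⟨!![a, 0; 0, b], !![a⁻¹, 0; 0, b⁻¹], ?_, ?_⟩, ?_, ?_, ?_⟩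
  · ext i j
    fin_cases i <;> fin_cases j <;> simp [Matrix.mul_apply, Fin.sum_univ_two, ha, hb]
  · ext i j
    fin_cases i <;> fin_cases j <;> simp [Matrix.mul_apply, Fin.sum_univ_two, ha, hb]
  · have := Submodule.span_singleton_smul_eq ((IsUnit.mk0 a ha).map f) ((1, 0) : R × R)
    simpa [ptAct_span, glMap_apply] using this
  · have := Submodule.span_singleton_smul_eq ((IsUnit.mk0 b hb).map f) ((0, 1) : R × R)
    simpa [ptAct_span, glMap_apply] using this
  · simp [ptAct_span, glMap_apply]

/-- `GL₂(K)` moves the frame `R(1,0), R(0,1), R(1,1)` to any three distinct points of the standard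
chain. -/
theorem exists_frame_stdChain (f : K →+* R) {p q r : Submodule R (R × R)}
    (hp : p ∈ StdChain K R f) (hq : q ∈ StdChain K R f) (hr : r ∈ StdChain K R f)
    (hpq : p ≠ q) (hpr : p ≠ r) (hqr : q ≠ r) :
    ∃ g : (Matrix (Fin 2) (Fin 2) K)ˣ,
      ptAct R (glMap f g) (Submodule.span R {(1, 0)}) = p ∧
      ptAct R (glMap f g) (Submodule.span R {(0, 1)}) = q ∧
      ptAct R (glMap f g) (Submodule.span R {(1, 1)}) = r := by
  obtain ⟨g₁, rfl⟩ := exists_fst f hp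
  -- The remaining points are pulled back along the matrices already found.
  obtain ⟨q, rfl⟩ : ∃ q₁, ptAct R (glMap f g₁) q₁ = q := ⟨_, ptAct_ptAct_inv _ q⟩
  obtain ⟨r, rfl⟩ : ∃ r₁, ptAct R (glMap f g₁) r₁ = r := ⟨_, ptAct_ptAct_inv _ r⟩
  have back (g : (Matrix (Fin 2) (Fin 2) K)ˣ) {x : Submodule R (R × R)}
      (hx : ptAct R (glMap f g) x ∈ StdChain K R f) : x ∈ StdChain K R f := by
    have := ptAct_glMap_mem f g⁻¹ hx
    rwa [map_inv, ptAct_inv_ptAct] at this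
  obtain ⟨g₂, h₁, rfl⟩ := exists_snd f (back g₁ hq) (fun h => hpq (congrArg _ h))
  obtain ⟨r, rfl⟩ : ∃ r₁, ptAct R (glMap f g₂) r₁ = r := ⟨_, ptAct_ptAct_inv _ r⟩
  obtain ⟨g₃, h₂, h₃, rfl⟩ := exists_third f (back g₂ (back g₁ hr))
    (fun h => hpr (by rw [← h, h₁])) (fun h => hqr (by rw [← h]))
  exact ⟨g₃ * g₂ * g₁, by simp only [map_mul, ptAct_mul, h₁, h₂],
    by simp only [map_mul, ptAct_mul, h₃], by simp only [map_mul, ptAct_mul]⟩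

/-- Any chain with three distinct points on it is the image of the standard chain under a matrix
that moves the frame `R(1,0), R(0,1), R(1,1)` to these points. -/
theorem exists_frame_chain (f : K →+* R) {D : Set (Submodule R (R × R))}
    (hD : IsKChain K R f D) {p q r : Submodule R (R × R)}
    (hp : p ∈ D) (hq : q ∈ D) (hr : r ∈ D) (hpq : p ≠ q) (hpr : p ≠ r) (hqr : q ≠ r) :
    ∃ γ : (Matrix (Fin 2) (Fin 2) R)ˣ,
      ptAct R γ (Submodule.span R {(1, 0)}) = p ∧
      ptAct R γ (Submodule.span R {(0, 1)}) = q ∧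
      ptAct R γ (Submodule.span R {(1, 1)}) = r ∧
      ptAct R γ '' StdChain K R f = D := by
  obtain ⟨δ, rfl⟩ := hD
  obtain ⟨p, hp, rfl⟩ := hp
  obtain ⟨q, hq, rfl⟩ := hq
  obtain ⟨r, hr, rfl⟩ := hr
  obtain ⟨g, h₁, h₂, h₃⟩ := exists_frame_stdChain f hp hq hr
    (fun h => hpq (congrArg _ h)) (fun h => hpr (congrArg _ h)) (fun h => hqr (congrArg _ h))
  refine ⟨glMap f g * δ, by rw [ptAct_mul, h₁], by rw [ptAct_mul, h₂], by rw [ptAct_mul, h₃], ?_⟩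
  conv_rhs => rw [← image_glMap_stdChain f g, Set.image_image]
  simp only [ptAct_mul]

end Chain

/-- Given chains `D`, `D'` and triples of mutually distinct points on them, some element of
`GL₂(R)` maps the first triple to the second one and `D` onto `D'`. -/
theorem stmt_11 {K R : Type*} [DivisionRing K] [Ring R] (f : K →+* R)
    (D D' : Set (Submodule R (R × R))) (hD : IsKChain K R f D) (hD' : IsKChain K R f D')
    (p q r p' q' r' : Submodule R (R × R))
    (hp : p ∈ D) (hq : q ∈ D) (hr : r ∈ D)
    (hp' : p' ∈ D') (hq' : q' ∈ D') (hr' : r' ∈ D')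
    (hpq : p ≠ q) (hpr : p ≠ r) (hqr : q ≠ r)
    (hpq' : p' ≠ q') (hpr' : p' ≠ r') (hqr' : q' ≠ r') :
    ∃ γ : (Matrix (Fin 2) (Fin 2) R)ˣ,
      ptAct R γ p = p' ∧ ptAct R γ q = q' ∧ ptAct R γ r = r' ∧ ptAct R γ '' D = D' := by
  obtain ⟨γ, rfl, rfl, rfl, rfl⟩ := exists_frame_chain f hD hp hq hr hpq hpr hqr
  obtain ⟨γ', rfl, rfl, rfl, rfl⟩ := exists_frame_chain f hD' hp' hq' hr' hpq' hpr' hqr'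
  refine ⟨γ⁻¹ * γ', ?_, ?_, ?_, ?_⟩
  · rw [ptAct_mul, ptAct_inv_ptAct]
  · rw [ptAct_mul, ptAct_inv_ptAct]
  · rw [ptAct_mul, ptAct_inv_ptAct]
  · simp only [Set.image_image, ptAct_mul, ptAct_inv_ptAct]
end
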